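/- Let G be a projection game and ρ ∈ [0,1]. If val₊(G)² > ρ, then the collision value satisfies ‖G‖² > (1−√(1−ρ²))/(1+√(1−ρ²)). Contrapositively, for every δ ∈ [0,1], if ‖G‖² < δ then val₊(G)² < 2√δ/(1+δ). -/

import Mathlib

open Finset

/-- A projection game: finite nonempty question sets `Q1` (Alice) and `Q2` (Bob),
a finite nonempty alphabet `A`, and a probability mass function `μ` on triples
`(u, v, π)` where `π : A → Option A` encodes a projection constraint
(the answer pair `(α, β)` satisfies `π` iff `π β = some α`). -/
structure ProjGame where
  Q1 : Type
  Q2 : Type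
  A : Type
  [fQ1 : Fintype Q1]
  [fQ2 : Fintype Q2]
  [fA : Fintype A]
  [neQ1 : Nonempty Q1]
  [neQ2 : Nonempty Q2]
  [neA : Nonempty A]
  [dQ1 : DecidableEq Q1]
  [dQ2 : DecidableEq Q2]
  [dA : DecidableEq A]
  μ : Q1 × Q2 × (A → Option A) → ℝ
  μ_nonneg : ∀ x, 0 ≤ μ x
  μ_sum : ∑ x, μ x = 1

attribute [instance] ProjGame.fQ1 ProjGame.fQ2 ProjGame.fA
  ProjGame.neQ1 ProjGame.neQ2 ProjGame.neA ProjGame.dQ1 ProjGame.dQ2 ProjGame.dA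

namespace ProjGame

variable (G : ProjGame)

/-- The `U`-marginal (Alice-side marginal) of `μ`. -/
noncomputable def wU (u : G.Q1) : ℝ := ∑ v, ∑ π, G.μ (u, v, π)

/-- The `V`-marginal (Bob-side marginal) of `μ`. -/
noncomputable def wV (v : G.Q2) : ℝ := ∑ u, ∑ π, G.μ (u, v, π)

/-- The game operator: `(Gf)(u,α) = E_{(v,π)|u} [∑_{β : π β = some α} f (v,β)]`. -/
noncomputable def op (f : G.Q2 × G.A → ℝ) : G.Q1 × G.A → ℝ :=
  fun p =>
    (∑ v, ∑ π, G.μ (p.1, v, π) * ∑ β, if π β = some p.2 then f (v, β) else 0) / G.wU p.1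

/-- Squared norm on functions on `U × Σ`: `‖g‖² = E_u [∑_α g(u,α)²]`. -/
noncomputable def normUsq (g : G.Q1 × G.A → ℝ) : ℝ := ∑ u, G.wU u * ∑ α, (g (u, α)) ^ 2

/-- Squared norm on functions on `V × Σ`: `‖f‖² = E_v [∑_β f(v,β)²]`. -/
noncomputable def normVsq (f : G.Q2 × G.A → ℝ) : ℝ := ∑ v, G.wV v * ∑ β, (f (v, β)) ^ 2

/-- Inner product `⟨g, g'⟩ = E_u [∑_α g(u,α) g'(u,α)]`. -/
noncomputable def inn (g g' : G.Q1 × G.A → ℝ) : ℝ :=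
  ∑ u, G.wU u * ∑ α, g (u, α) * g' (u, α)

/-- An assignment for Bob. -/
def IsBob (f : G.Q2 × G.A → ℝ) : Prop := (∀ p, 0 ≤ f p) ∧ ∀ v, ∑ β, f (v, β) = 1

/-- An assignment for Alice. -/
def IsAlice (g : G.Q1 × G.A → ℝ) : Prop := (∀ p, 0 ≤ g p) ∧ ∀ u, ∑ α, g (u, α) = 1

/-- The value of the game: `val(G) = max ⟨g, Gf⟩` over assignments. -/
noncomputable def val : ℝ :=
  sSup { x | ∃ f g, G.IsBob f ∧ G.IsAlice g ∧ x = G.inn g (G.op f) }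

/-- The collision value `‖G‖ = max_f ‖Gf‖` over assignments `f` for Bob. -/
noncomputable def collVal : ℝ :=
  sSup { x | ∃ f, G.IsBob f ∧ x = Real.sqrt (G.normUsq (G.op f)) }

/-- Product of projection constraints. -/
def tensorC {A A' : Type} (π : A → Option A) (π' : A' → Option A') :
    A × A' → Option (A × A') :=
  fun b => (π b.1).bind fun a => (π' b.2).map fun a' => (a, a')

/-- The product (parallel repetition) of two projection games. -/
noncomputable def tensor (G H : ProjGame) : ProjGame where
  Q1 := G.Q1 × H.Q1
  Q2 := G.Q2 × H.Q2
  A := G.A × H.A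
  μ := fun x =>
    ∑ y : (G.Q1 × G.Q2 × (G.A → Option G.A)) × (H.Q1 × H.Q2 × (H.A → Option H.A)),
      if ((y.1.1, y.2.1), (y.1.2.1, y.2.2.1), tensorC y.1.2.2 y.2.2.2) = x
      then G.μ y.1 * H.μ y.2 else 0
  μ_nonneg := by
    intro x
    refine Finset.sum_nonneg fun y _ => ?_
    split
    · exact mul_nonneg (G.μ_nonneg _) (H.μ_nonneg _)
    · exact le_refl 0
  μ_sum := by
    rw [Finset.sum_comm]
    simp only [Finset.sum_ite_eq, Finset.mem_univ, if_true]
    rw [Fintype.sum_prod_type]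
    calc (∑ y1, ∑ y2, G.μ y1 * H.μ y2)
        = (∑ y1, G.μ y1) * (∑ y2, H.μ y2) := by rw [Finset.sum_mul_sum]
      _ = 1 := by rw [G.μ_sum, H.μ_sum, mul_one]

/-- `G.iterTensor k` is the `(k+1)`-fold parallel repetition `G^{⊗(k+1)}`. -/
noncomputable def iterTensor (G : ProjGame) : ℕ → ProjGame
  | 0 => G
  | n + 1 => G.tensor (G.iterTensor n)

/-- `val₊(G)`: supremum of values of vector assignments. -/
noncomputable def valPlus (G : ProjGame) : ℝ :=
  sSup { x | ∃ n : ℕ, 0 < n ∧ ∃ f : G.Q2 × G.A → Fin n → ℝ,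
    (∀ p i, 0 ≤ f p i) ∧
    (∀ v, Real.sqrt (∑ i, (∑ β, f (v, β) i) ^ 2) ≤ 1) ∧
    x = Real.sqrt (∑ u, G.wU u * ∑ α, ∑ i, (G.op (fun q => f q i) (u, α)) ^ 2) }

/-- `‖Th‖² = E_v [(∑_β h(v,β))²]`. -/
noncomputable def Tnormsq (G : ProjGame) (h : G.Q2 × G.A → ℝ) : ℝ :=
  ∑ v, G.wV v * (∑ β, h (v, β)) ^ 2

/-- `λ₊(G)`: supremum of `‖Gh‖/‖Th‖` over nonnegative `h` with `‖Th‖ > 0`. -/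
noncomputable def lambdaPlus (G : ProjGame) : ℝ :=
  sSup { x | ∃ h : G.Q2 × G.A → ℝ, (∀ p, 0 ≤ h p) ∧
    0 < Real.sqrt (G.Tnormsq h) ∧
    x = Real.sqrt (G.normUsq (G.op h)) / Real.sqrt (G.Tnormsq h) }

/-- The symmetrized distribution on `V × V` (with the constraints marginalized out). -/
noncomputable def msym (G : ProjGame) (v v' : G.Q2) : ℝ :=
  ∑ u, ((∑ π, G.μ (u, v, π)) * (∑ π', G.μ (u, v', π'))) / G.wU u

/-- `G` is `γ`-expanding: the Markov operator of the symmetrized constraint graph has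
spectral gap at least `γ`, i.e. `|⟨x, Ax⟩| ≤ (1-γ) E_v[x(v)²]` for mean-zero `x`. -/
def IsExpanding (G : ProjGame) (γ : ℝ) : Prop :=
  ∀ x : G.Q2 → ℝ, (∑ v, G.wV v * x v) = 0 →
    |∑ v, ∑ v', G.msym v v' * x v * x v'| ≤ (1 - γ) * ∑ v, G.wV v * (x v) ^ 2

/-- The symmetrized distribution on `(v, v', π, π')`. -/
noncomputable def msymFull (G : ProjGame) (v v' : G.Q2) (π π' : G.A → Option G.A) : ℝ :=
  ∑ u, (G.μ (u, v, π) * G.μ (u, v', π')) / G.wU u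

/-- The value of the assignment `x` in the symmetrized game `G_sym`. -/
noncomputable def symValAssign (G : ProjGame) (x : G.Q2 → G.A) : ℝ :=
  ∑ v, ∑ v', ∑ π, ∑ π', G.msymFull v v' π π' *
    (if ∃ α, π (x v) = some α ∧ π' (x v') = some α then 1 else 0)

/-- The value of the symmetrized game `G_sym`. -/
noncomputable def symVal (G : ProjGame) : ℝ :=
  sSup { r | ∃ x : G.Q2 → G.A, r = G.symValAssign x }

end ProjGame

namespace ProjGame

lemma aux_thr (S : Finset ℝ) : (∀ s ∈ S, 0 < s) →
    ∃ (k : ℕ) (t w : Fin k → ℝ), (∀ j, 0 ≤ w j) ∧ (∀ j, 0 ≤ t j) ∧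
      (∀ j, ∃ s ∈ S, t j < s) ∧ ∀ a ∈ S, (∑ j, if t j < a then w j else 0) = a := by
  induction S using Finset.induction_on_max with
  | empty =>
    intro _
    exact ⟨0, Fin.elim0, Fin.elim0, fun j => j.elim0, fun j => j.elim0, fun j => j.elim0, by simp⟩
  | insert a S hmax ih =>
    intro hpos
    obtain ⟨k, t, w, hw, ht, hts, hsum⟩ := ih (fun s hs => hpos s (Finset.mem_insert_of_mem hs))
    have ha : 0 < a := hpos a (Finset.mem_insert_self _ _)
    obtain ⟨m, hm0, hma, hmS, htot⟩ : ∃ m : ℝ, 0 ≤ m ∧ m < a ∧ (∀ s ∈ S, s ≤ m) ∧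
        (∑ j, w j) = m := by
      by_cases hS : S.Nonempty
      · refine ⟨S.max' hS, (hpos _ (Finset.mem_insert_of_mem (S.max'_mem hS))).le,
          hmax _ (S.max'_mem hS), fun s hs => S.le_max' s hs, ?_⟩
        refine Eq.trans ?_ (hsum _ (S.max'_mem hS))
        refine Finset.sum_congr rfl fun j _ => ?_
        obtain ⟨s, hs, hlt⟩ := hts j
        rw [if_pos (hlt.trans_le (S.le_max' s hs))]
      · rw [Finset.not_nonempty_iff_eq_empty] at hS
        subst hS
        refine ⟨0, le_rfl, ha, by simp, ?_⟩
        refine Finset.sum_eq_zero fun j _ => ?_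
        obtain ⟨s, hs, _⟩ := hts j
        simp at hs
    refine ⟨k + 1, Fin.cons m t, Fin.cons (a - m) w, ?_, ?_, ?_, ?_⟩
    · intro j
      refine Fin.cases ?_ (fun j => ?_) j
      · simpa using hma.le
      · simpa using hw j
    · intro j
      refine Fin.cases ?_ (fun j => ?_) j
      · simpa using hm0
      · simpa using ht j
    · intro j
      refine Fin.cases ?_ (fun j => ?_) j
      · exact ⟨a, Finset.mem_insert_self _ _, by simpa using hma⟩
      · obtain ⟨s, hs, hlt⟩ := hts j
        exact ⟨s, Finset.mem_insert_of_mem hs, by simpa using hlt⟩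
    · intro b hb
      rw [Fin.sum_univ_succ]
      simp only [Fin.cons_zero, Fin.cons_succ]
      rcases Finset.mem_insert.1 hb with rfl | hb
      · rw [if_pos hma]
        have : (∑ j, if t j < b then w j else 0) = ∑ j, w j := by
          refine Finset.sum_congr rfl fun j _ => ?_
          obtain ⟨s, hs, hlt⟩ := hts j
          rw [if_pos (hlt.trans (hmax s hs))]
        rw [this, htot]; ring
      · rw [if_neg (not_lt.2 (hmS b hb)), hsum b hb, zero_add]

lemma aux_thr' (S : Finset ℝ) (h0 : ∀ s ∈ S, 0 ≤ s) (h1 : ∀ s ∈ S, s ≤ 1) :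
    ∃ (k : ℕ) (t w : Fin k → ℝ), (∀ j, 0 ≤ w j) ∧ (∀ j, 0 ≤ t j) ∧
      (∑ j, w j = 1) ∧ ∀ a ∈ S, (∑ j, if t j < a then w j else 0) = a := by
  obtain ⟨k, t, w, hw, ht, hts, hsum⟩ := aux_thr (insert 1 (S.filter (fun s => 0 < s))) (by
    intro s hs
    rcases Finset.mem_insert.1 hs with rfl | hs
    · exact one_pos
    · exact (Finset.mem_filter.1 hs).2)
  refine ⟨k, t, w, hw, ht, ?_, ?_⟩
  · refine Eq.trans ?_ (hsum 1 (Finset.mem_insert_self _ _))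
    refine Finset.sum_congr rfl fun j _ => ?_
    obtain ⟨s, hs, hlt⟩ := hts j
    have : s ≤ 1 := by
      rcases Finset.mem_insert.1 hs with rfl | hs
      · exact le_rfl
      · exact h1 s (Finset.mem_filter.1 hs).1
    rw [if_pos (hlt.trans_le this)]
  · intro a ha
    rcases (h0 a ha).eq_or_lt with h | h
    · subst h
      refine Finset.sum_eq_zero fun j _ => ?_
      rw [if_neg (not_lt.2 (ht j))]
    · exact hsum a (Finset.mem_insert_of_mem (Finset.mem_filter.2 ⟨ha, h⟩))

/-- `F f y α` -/
noncomputable def xF (G : ProjGame) (f : G.Q2 × G.A → ℝ) (y : G.Q2 × (G.A → Option G.A))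
    (α : G.A) : ℝ := ∑ β, if y.2 β = some α then f (y.1, β) else 0

noncomputable def xq (G : ProjGame) (K : G.Q2 × G.A → G.Q2 × G.A → ℝ)
    (y y' : G.Q2 × (G.A → Option G.A)) : ℝ :=
  ∑ α, ∑ β, ∑ β', if y.2 β = some α ∧ y'.2 β' = some α then K (y.1, β) (y'.1, β') else 0

noncomputable def xW (G : ProjGame) (u : G.Q1) (y y' : G.Q2 × (G.A → Option G.A)) : ℝ :=
  G.μ (u, y) * G.μ (u, y') / G.wU u

noncomputable def xB (G : ProjGame) (q : (G.Q2 × (G.A → Option G.A)) →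
    (G.Q2 × (G.A → Option G.A)) → ℝ) : ℝ :=
  ∑ u, ∑ y, ∑ y', G.xW u y y' * q y y'

lemma wU_nonneg (G : ProjGame) (u : G.Q1) : 0 ≤ G.wU u :=
  Finset.sum_nonneg fun _ _ => Finset.sum_nonneg fun _ _ => G.μ_nonneg _

lemma wU_eq (G : ProjGame) (u : G.Q1) : G.wU u = ∑ y, G.μ (u, y) := by
  rw [Fintype.sum_prod_type]; rfl

lemma xW_nonneg (G : ProjGame) (u) (y y') : 0 ≤ G.xW u y y' :=
  div_nonneg (mul_nonneg (G.μ_nonneg _) (G.μ_nonneg _)) (G.wU_nonneg u)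

lemma xB_mono (G : ProjGame) {q q'} (h : ∀ y y', q y y' ≤ q' y y') : G.xB q ≤ G.xB q' :=
  Finset.sum_le_sum fun _ _ => Finset.sum_le_sum fun _ _ => Finset.sum_le_sum fun _ _ =>
    mul_le_mul_of_nonneg_left (h _ _) (G.xW_nonneg _ _ _)

lemma xB_nonneg (G : ProjGame) {q} (h : ∀ y y', 0 ≤ q y y') : 0 ≤ G.xB q :=
  Finset.sum_nonneg fun _ _ => Finset.sum_nonneg fun _ _ => Finset.sum_nonneg fun _ _ =>
    mul_nonneg (G.xW_nonneg _ _ _) (h _ _)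

lemma xB_one (G : ProjGame) : G.xB (fun _ _ => 1) = 1 := by
  have h : ∑ u, G.wU u = 1 := by
    rw [← G.μ_sum, Fintype.sum_prod_type]
    exact Finset.sum_congr rfl fun u _ => G.wU_eq u
  refine Eq.trans ?_ h
  refine Finset.sum_congr rfl fun u _ => ?_
  have : ∑ y, ∑ y', G.xW u y y' * 1 = G.wU u * G.wU u / G.wU u := by
    conv_rhs => rw [mul_div_assoc]
    rw [← mul_div_assoc]
    conv_rhs => rw [show G.wU u * G.wU u = (∑ y, G.μ (u, y)) * ∑ y, G.μ (u, y) by rw [← wU_eq]]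
    rw [Finset.sum_mul_sum]
    simp only [Finset.sum_div, mul_one]
    rfl
  rw [this]
  rcases eq_or_ne (G.wU u) 0 with h0 | h0
  · simp [h0]
  · field_simp

lemma xB_lin (G : ProjGame) (c d : ℝ) (q q') :
    G.xB (fun y y' => c * q y y' + d * q' y y') = c * G.xB q + d * G.xB q' := by
  simp only [xB, Finset.mul_sum, ← Finset.sum_add_distrib]
  refine Finset.sum_congr rfl fun _ _ => Finset.sum_congr rfl fun _ _ =>
    Finset.sum_congr rfl fun _ _ => ?_
  ring

lemma xB_sum (G : ProjGame) {ι : Type} [Fintype ι] (p : ι → ℝ) (q : ι → (G.Q2 × (G.A → Option G.A)) →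
    (G.Q2 × (G.A → Option G.A)) → ℝ) :
    G.xB (fun y y' => ∑ i, p i * q i y y') = ∑ i, p i * G.xB (q i) := by
  simp only [xB, Finset.mul_sum]
  conv_rhs => rw [Finset.sum_comm]
  refine Finset.sum_congr rfl fun u _ => ?_
  conv_rhs => rw [Finset.sum_comm]
  refine Finset.sum_congr rfl fun y _ => ?_
  conv_rhs => rw [Finset.sum_comm]
  refine Finset.sum_congr rfl fun y' _ => Finset.sum_congr rfl fun i _ => ?_
  ring

lemma xq_mono (G : ProjGame) {K K'} (h : ∀ a b, K a b ≤ K' a b) (y y') :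
    G.xq K y y' ≤ G.xq K' y y' := by
  refine Finset.sum_le_sum fun _ _ => Finset.sum_le_sum fun _ _ => Finset.sum_le_sum fun _ _ => ?_
  split_ifs
  · exact h _ _
  · exact le_rfl

lemma xq_sum (G : ProjGame) {ι : Type} [Fintype ι] (p : ι → ℝ) (K : ι → G.Q2 × G.A → G.Q2 × G.A → ℝ) (y y') :
    G.xq (fun a b => ∑ i, p i * K i a b) y y' = ∑ i, p i * G.xq (K i) y y' := by
  simp only [xq, Finset.mul_sum]
  conv_rhs => rw [Finset.sum_comm]
  refine Finset.sum_congr rfl fun u _ => ?_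
  conv_rhs => rw [Finset.sum_comm]
  refine Finset.sum_congr rfl fun b _ => ?_
  conv_rhs => rw [Finset.sum_comm]
  refine Finset.sum_congr rfl fun b' _ => ?_
  split_ifs
  · rfl
  · simp

lemma xq_scale (G : ProjGame) (K) (c : G.Q2 → G.Q2 → ℝ) (y y') :
    G.xq (fun a b => c a.1 b.1 * K a b) y y' = c y.1 y'.1 * G.xq K y y' := by
  simp only [xq, Finset.mul_sum]
  refine Finset.sum_congr rfl fun _ _ => Finset.sum_congr rfl fun _ _ =>
    Finset.sum_congr rfl fun _ _ => ?_
  split_ifs <;> simp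

lemma xq_prod (G : ProjGame) (f g : G.Q2 × G.A → ℝ) (y y') :
    G.xq (fun a b => f a * g b) y y' = ∑ α, G.xF f y α * G.xF g y' α := by
  simp only [xq, xF, Finset.sum_mul_sum]
  refine Finset.sum_congr rfl fun _ _ => Finset.sum_congr rfl fun _ _ =>
    Finset.sum_congr rfl fun _ _ => ?_
  split_ifs <;> simp_all

lemma xF_nonneg (G : ProjGame) {f : G.Q2 × G.A → ℝ} (h : ∀ p, 0 ≤ f p) (y α) :
    0 ≤ G.xF f y α := by
  refine Finset.sum_nonneg fun _ _ => ?_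
  split_ifs
  · exact h _
  · exact le_rfl

lemma xF_sum_le (G : ProjGame) {f : G.Q2 × G.A → ℝ} (h : ∀ p, 0 ≤ f p) (y) :
    ∑ α, G.xF f y α ≤ ∑ β, f (y.1, β) := by
  unfold xF
  rw [Finset.sum_comm]
  refine Finset.sum_le_sum fun β _ => ?_
  rcases hβ : y.2 β with _ | a
  · simpa using h _
  · simp

lemma xq_prod_le (G : ProjGame) {f g : G.Q2 × G.A → ℝ} (hf : ∀ p, 0 ≤ f p) (hg : ∀ p, 0 ≤ g p)
    (y y') : G.xq (fun a b => f a * g b) y y' ≤ (∑ β, f (y.1, β)) * ∑ β, g (y'.1, β) := by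
  rw [xq_prod]
  calc _ ≤ ∑ α, G.xF f y α * ∑ β, g (y'.1, β) := by
        refine Finset.sum_le_sum fun α _ => mul_le_mul_of_nonneg_left ?_ (G.xF_nonneg hf y α)
        refine le_trans ?_ (G.xF_sum_le hg y')
        exact Finset.single_le_sum (fun i _ => G.xF_nonneg hg y' i) (Finset.mem_univ α)
    _ = (∑ α, G.xF f y α) * ∑ β, g (y'.1, β) := by rw [Finset.sum_mul]
    _ ≤ _ := mul_le_mul_of_nonneg_right (G.xF_sum_le hf y) (Finset.sum_nonneg fun _ _ => hg _)

lemma xq_prod_nonneg (G : ProjGame) {f g : G.Q2 × G.A → ℝ} (hf : ∀ p, 0 ≤ f p)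
    (hg : ∀ p, 0 ≤ g p) (y y') : 0 ≤ G.xq (fun a b => f a * g b) y y' := by
  rw [xq_prod]
  exact Finset.sum_nonneg fun α _ => mul_nonneg (G.xF_nonneg hf y α) (G.xF_nonneg hg y' α)

lemma op_eq (G : ProjGame) (f) (u α) :
    G.op f (u, α) = (∑ y, G.μ (u, y) * G.xF f y α) / G.wU u := by
  rw [Fintype.sum_prod_type]; rfl

lemma normUsq_op (G : ProjGame) (f) :
    G.normUsq (G.op f) = G.xB (G.xq (fun a b => f a * f b)) := by
  unfold normUsq xB
  refine Finset.sum_congr rfl fun u _ => ?_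
  simp only [xq_prod, op_eq, Finset.mul_sum]
  have h : ∀ α, G.wU u * ((∑ y, G.μ (u, y) * G.xF f y α) / G.wU u) ^ 2 =
      ∑ y, ∑ y', G.xW u y y' * (G.xF f y α * G.xF f y' α) := by
    intro α
    have : G.wU u * ((∑ y, G.μ (u, y) * G.xF f y α) / G.wU u) ^ 2 =
      ((∑ y, G.μ (u, y) * G.xF f y α) * (∑ y, G.μ (u, y) * G.xF f y α)) / G.wU u := by
      rcases eq_or_ne (G.wU u) 0 with h0 | h0
      · simp [h0]
      · field_simp
    rw [this, Finset.sum_mul_sum]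
    simp only [Finset.sum_div, xW]
    refine Finset.sum_congr rfl fun _ _ => Finset.sum_congr rfl fun _ _ => ?_
    ring
  simp only [h]
  rw [Finset.sum_comm]
  refine Finset.sum_congr rfl fun _ _ => ?_
  rw [Finset.sum_comm]

lemma normUsq_nonneg (G : ProjGame) (g) : 0 ≤ G.normUsq g :=
  Finset.sum_nonneg fun u _ => mul_nonneg (G.wU_nonneg u) (Finset.sum_nonneg fun _ _ => sq_nonneg _)

lemma normUsq_bob_le (G : ProjGame) {f} (hf : G.IsBob f) : G.normUsq (G.op f) ≤ 1 := by
  rw [normUsq_op, ← G.xB_one]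
  refine G.xB_mono fun y y' => ?_
  have := G.xq_prod_le hf.1 hf.1 y y'
  rwa [hf.2, hf.2, one_mul] at this

lemma collVal_nonneg (G : ProjGame) : 0 ≤ G.collVal := by
  apply Real.sSup_nonneg
  rintro x ⟨f, _, rfl⟩
  exact Real.sqrt_nonneg _

lemma collVal_le (G : ProjGame) : G.collVal ≤ 1 := by
  apply Real.sSup_le _ zero_le_one
  rintro x ⟨f, hf, rfl⟩
  exact Real.sqrt_le_one.2 (G.normUsq_bob_le hf)

lemma normUsq_le_coll (G : ProjGame) {f} (hf : G.IsBob f) :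
    G.normUsq (G.op f) ≤ G.collVal ^ 2 := by
  have : Real.sqrt (G.normUsq (G.op f)) ≤ G.collVal := by
    apply le_csSup
    · refine ⟨1, ?_⟩
      rintro x ⟨f, hf, rfl⟩
      exact Real.sqrt_le_one.2 (G.normUsq_bob_le hf)
    · exact ⟨f, hf, rfl⟩
  calc _ = Real.sqrt (G.normUsq (G.op f)) ^ 2 := (Real.sq_sqrt (G.normUsq_nonneg _)).symm
    _ ≤ _ := by gcongr

lemma exists_bob (G : ProjGame) : ∃ f, G.IsBob f := by
  obtain ⟨a⟩ := G.neA
  refine ⟨fun p => if p.2 = a then 1 else 0, fun p => ?_, fun v => by simp⟩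
  dsimp only
  split_ifs <;> norm_num

lemma round_step (G : ProjGame) {Ω : Type} [Fintype Ω] (w : Ω → ℝ) (hw : ∀ o, 0 ≤ w o)
    (hw1 : ∑ o, w o = 1) (act : Ω → G.Q2 → Prop) [∀ o v, Decidable (act o v)] (h : Ω → G.Q2 × G.A → ℝ)
    (h0 : ∀ o p, 0 ≤ h o p) (hact : ∀ o v, act o v → ∑ β, h o (v, β) = 1)
    (hnact : ∀ o v, ¬ act o v → ∀ β, h o (v, β) = 0)
    (H : G.Q2 × G.A → G.Q2 × G.A → ℝ) (hH : ∀ a b, H a b = ∑ o, w o * (h o a * h o b))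
    (M : G.Q2 → G.Q2 → ℝ) (hM : ∀ v v', 1 - M v v' ≤
      ∑ o, w o * (if act o v ∨ act o v' then 0 else 1)) (hM1 : ∀ v v', M v v' ≤ 1) (T : ℕ) :
    ∃ (ι : Type) (_ : Fintype ι) (p : ι → ℝ) (f : ι → G.Q2 × G.A → ℝ),
      (∀ i, 0 ≤ p i) ∧ (∑ i, p i = 1) ∧ (∀ i, G.IsBob (f i)) ∧
      ∀ a b, (∑ k ∈ Finset.range T, (1 - M a.1 b.1) ^ k) * H a b ≤
        ∑ i, p i * (f i a * f i b) := by
  induction T with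
  | zero =>
    obtain ⟨f, hf⟩ := G.exists_bob
    refine ⟨Unit, inferInstance, fun _ => 1, fun _ => f, by simp, by simp, fun _ => hf, ?_⟩
    intro a b
    simpa using mul_nonneg (hf.1 a) (hf.1 b)
  | succ T ih =>
    obtain ⟨ι, _, p, f, hp, hp1, hf, hK⟩ := ih
    refine ⟨Ω × ι, inferInstance, fun x => w x.1 * p x.2,
      fun x q => if act x.1 q.1 then h x.1 q else f x.2 q, ?_, ?_, ?_, ?_⟩
    · exact fun i => mul_nonneg (hw _) (hp _)
    · rw [Fintype.sum_prod_type]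
      simp [← Finset.mul_sum, hp1, hw1]
    · rintro ⟨o, i⟩
      refine ⟨fun q => ?_, fun v => ?_⟩
      · dsimp only
        split_ifs
        · exact h0 _ _
        · exact (hf i).1 _
      · dsimp only
        split_ifs with hv
        · exact hact o v hv
        · exact (hf i).2 v
    · intro a b
      have key : ∀ o i, h o a * h o b +
          (if act o a.1 ∨ act o b.1 then 0 else 1) * (f i a * f i b) ≤
          (if act o a.1 then h o a else f i a) * (if act o b.1 then h o b else f i b) := by
        intro o i
        by_cases ha : act o a.1 <;> by_cases hb : act o b.1
        · simp [ha, hb]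
        · have : h o b = 0 := hnact o b.1 hb b.2
          simpa [ha, hb, this] using mul_nonneg (h0 o a) ((hf i).1 b)
        · have : h o a = 0 := hnact o a.1 ha a.2
          simpa [ha, hb, this] using mul_nonneg ((hf i).1 a) (h0 o b)
        · have : h o a = 0 := hnact o a.1 ha a.2
          simp [ha, hb, this]
      set S := ∑ i, p i * (f i a * f i b) with hS
      have hS0 : 0 ≤ S := Finset.sum_nonneg fun i _ =>
        mul_nonneg (hp i) (mul_nonneg ((hf i).1 a) ((hf i).1 b))
      have e1 : H a b + (∑ o, w o * (if act o a.1 ∨ act o b.1 then 0 else 1)) * S =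
          ∑ x : Ω × ι, w x.1 * p x.2 * (h x.1 a * h x.1 b +
          (if act x.1 a.1 ∨ act x.1 b.1 then 0 else 1) * (f x.2 a * f x.2 b)) := by
        rw [Fintype.sum_prod_type, hH, Finset.sum_mul, ← Finset.sum_add_distrib]
        refine Finset.sum_congr rfl fun o _ => ?_
        have : w o * (h o a * h o b) = ∑ i, p i * (w o * (h o a * h o b)) := by
          rw [← Finset.sum_mul, hp1, one_mul]
        rw [this, hS, Finset.mul_sum, ← Finset.sum_add_distrib]
        refine Finset.sum_congr rfl fun i _ => ?_
        ring
      have hHn : 0 ≤ H a b := by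
        rw [hH]; exact Finset.sum_nonneg fun o _ => mul_nonneg (hw o) (mul_nonneg (h0 _ _) (h0 _ _))
      calc (∑ k ∈ Finset.range (T + 1), (1 - M a.1 b.1) ^ k) * H a b
          = H a b + (1 - M a.1 b.1) * ((∑ k ∈ Finset.range T, (1 - M a.1 b.1) ^ k) * H a b) := by
            rw [geom_sum_succ]; ring
        _ ≤ H a b + (1 - M a.1 b.1) * S := by
            have := hK a b
            have h1 : 0 ≤ 1 - M a.1 b.1 := sub_nonneg.2 (hM1 a.1 b.1)
            gcongr
        _ ≤ H a b + (∑ o, w o * (if act o a.1 ∨ act o b.1 then 0 else 1)) * S := by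
            have := hM a.1 b.1
            gcongr
        _ ≤ _ := by
            rw [e1]
            refine Finset.sum_le_sum fun x _ => ?_
            exact mul_le_mul_of_nonneg_left (key x.1 x.2) (mul_nonneg (hw _) (hp _))

lemma round_lim (G : ProjGame) {Ω : Type} [Fintype Ω] (w : Ω → ℝ) (hw : ∀ o, 0 ≤ w o)
    (hw1 : ∑ o, w o = 1) (act : Ω → G.Q2 → Prop) [∀ o v, Decidable (act o v)]
    (h : Ω → G.Q2 × G.A → ℝ)
    (h0 : ∀ o p, 0 ≤ h o p) (hact : ∀ o v, act o v → ∑ β, h o (v, β) = 1)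
    (hnact : ∀ o v, ¬ act o v → ∀ β, h o (v, β) = 0)
    (H : G.Q2 × G.A → G.Q2 × G.A → ℝ) (hH : ∀ a b, H a b = ∑ o, w o * (h o a * h o b))
    (M : G.Q2 → G.Q2 → ℝ) (hM : ∀ v v', 1 - M v v' ≤
      ∑ o, w o * (if act o v ∨ act o v' then 0 else 1)) (hM0 : ∀ v v', 0 ≤ M v v')
    (hM1 : ∀ v v', M v v' ≤ 1) :
    G.xB (fun y y' => (M y.1 y'.1)⁻¹ * G.xq H y y') ≤ G.collVal ^ 2 := by
  have hHn : ∀ a b, 0 ≤ H a b := fun a b => by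
    rw [hH]; exact Finset.sum_nonneg fun o _ => mul_nonneg (hw o) (mul_nonneg (h0 _ _) (h0 _ _))
  have hT : ∀ T : ℕ, G.xB (fun y y' => (∑ k ∈ Finset.range T, (1 - M y.1 y'.1) ^ k) * G.xq H y y')
      ≤ G.collVal ^ 2 := by
    intro T
    obtain ⟨ι, _, p, f, hp, hp1, hf, hK⟩ :=
      G.round_step w hw hw1 act h h0 hact hnact H hH M hM hM1 T
    calc _ = G.xB (G.xq (fun a b => (∑ k ∈ Finset.range T, (1 - M a.1 b.1) ^ k) * H a b)) := by
          congr 1; funext y y'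
          exact (G.xq_scale H (fun v v' => ∑ k ∈ Finset.range T, (1 - M v v') ^ k) y y').symm
      _ ≤ G.xB (G.xq (fun a b => ∑ i, p i * (f i a * f i b))) :=
          G.xB_mono fun y y' => G.xq_mono hK y y'
      _ = ∑ i, p i * G.normUsq (G.op (f i)) := by
          simp only [normUsq_op]
          rw [← xB_sum]
          congr 1; funext y y'
          exact G.xq_sum p (fun i a b => f i a * f i b) y y'
      _ ≤ ∑ i, p i * G.collVal ^ 2 := by
          refine Finset.sum_le_sum fun i _ => ?_
          exact mul_le_mul_of_nonneg_left (G.normUsq_le_coll (hf i)) (hp i)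
      _ = _ := by rw [← Finset.sum_mul, hp1, one_mul]
  have hxq0 : ∀ y y', 0 ≤ G.xq H y y' := fun y y' => by
    refine Finset.sum_nonneg fun _ _ => Finset.sum_nonneg fun _ _ => Finset.sum_nonneg fun _ _ => ?_
    split_ifs
    · exact hHn _ _
    · exact le_rfl
  refine le_of_tendsto' (f := fun T : ℕ => G.xB (fun y y' => (if M y.1 y'.1 = 0 then 0 else
    ∑ k ∈ Finset.range T, (1 - M y.1 y'.1) ^ k) * G.xq H y y')) (x := Filter.atTop) ?_ ?_
  · unfold xB
    refine tendsto_finsetSum _ fun u _ => tendsto_finsetSum _ fun y _ =>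
      tendsto_finsetSum _ fun y' _ => ?_
    refine Filter.Tendsto.const_mul _ (Filter.Tendsto.mul_const _ ?_)
    by_cases hz : M y.1 y'.1 = 0
    · simp [hz]
    · simp only [hz, if_false]
      have hp : 0 < M y.1 y'.1 := lt_of_le_of_ne (hM0 _ _) (Ne.symm hz)
      have := hasSum_geometric_of_lt_one (r := 1 - M y.1 y'.1) (by linarith [hM1 y.1 y'.1])
        (by linarith)
      rw [sub_sub_cancel] at this
      exact this.tendsto_sum_nat
  · intro T
    refine le_trans (G.xB_mono fun y y' => ?_) (hT T)
    refine mul_le_mul_of_nonneg_right ?_ (hxq0 y y')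
    split_ifs
    · exact Finset.sum_nonneg fun k _ => pow_nonneg (by linarith [hM1 y.1 y'.1]) k
    · exact le_rfl

lemma le_of_sq_le_sq_aux {p q : ℝ} (hq : 0 ≤ q) (h : p ^ 2 ≤ q ^ 2) : p ≤ q :=
  le_trans (le_abs_self p) (abs_le_of_sq_le_sq h hq)

lemma aux_scalar {p a M : ℝ} (ha : 0 ≤ a) (haM : a ≤ M) (h2 : a + M ≤ 2)
    (hp : p ^ 2 ≤ a * M) : p * (1 + (M⁻¹ * a)) ≤ 2 * Real.sqrt (M⁻¹ * a) := by
  rcases (ha.trans haM).eq_or_lt with h | hM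
  · subst h
    have : a = 0 := le_antisymm haM ha
    subst this
    have : p = 0 := by nlinarith
    subst this
    simp
  · set s := Real.sqrt (M⁻¹ * a) with hs
    have hs0 : 0 ≤ s := Real.sqrt_nonneg _
    have hs2 : s ^ 2 = M⁻¹ * a := Real.sq_sqrt (by positivity)
    have ha' : a = s ^ 2 * M := by rw [hs2]; field_simp
    have hpm : p ≤ s * M := by
      refine le_of_sq_le_sq_aux (by positivity) ?_
      rw [ha'] at hp
      nlinarith
    rw [← hs2]
    have : s ^ 2 * M + M ≤ 2 := by rw [← ha']; exact h2
    nlinarith [mul_le_mul_of_nonneg_left this hs0, mul_le_mul_of_nonneg_right hpm (by positivity : 0 ≤ 1 + s ^ 2)]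

lemma aux_tangent {p s t : ℝ} (hs0 : 0 ≤ s) (ht0 : 0 ≤ t) (ht1 : t ≤ 1)
    (hp : p * (1 + s ^ 2) ≤ 2 * s) :
    p ≤ 2 * t / (1 + t ^ 2) + 2 * (1 - t ^ 2) / (1 + t ^ 2) ^ 2 * (s - t) := by
  have h1 : p ≤ 2 * s / (1 + s ^ 2) := by rw [le_div_iff₀ (by positivity)]; exact hp
  refine h1.trans ?_
  have : 2 * t / (1 + t ^ 2) + 2 * (1 - t ^ 2) / (1 + t ^ 2) ^ 2 * (s - t) - 2 * s / (1 + s ^ 2)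
     = 2 * (s - t) ^ 2 * (s + 2 * t - s * t ^ 2) / ((1 + t ^ 2) ^ 2 * (1 + s ^ 2)) := by
    field_simp
    ring
  rw [← sub_nonneg, this]
  have : 0 ≤ s + 2 * t - s * t ^ 2 := by nlinarith [mul_nonneg hs0 ht0, mul_nonneg hs0 (by nlinarith : 0 ≤ 1 - t ^ 2)]
  positivity

lemma xB_jensen (G : ProjGame) (c : (G.Q2 × (G.A → Option G.A)) →
    (G.Q2 × (G.A → Option G.A)) → ℝ) (hc : ∀ y y', 0 ≤ c y y') {t : ℝ} (ht : 0 ≤ t)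
    (h : G.xB c ≤ t ^ 2) : G.xB (fun y y' => Real.sqrt (c y y')) ≤ t := by
  set e := G.xB (fun y y' => Real.sqrt (c y y')) with he
  have he0 : 0 ≤ e := G.xB_nonneg fun _ _ => Real.sqrt_nonneg _
  have h1 : 2 * e * e + (- e ^ 2) * 1 ≤ G.xB c := by
    conv_lhs => rw [← G.xB_one]
    conv_lhs => enter [1, 2]; rw [he]
    rw [← xB_lin]
    refine G.xB_mono fun y y' => ?_
    have := Real.sq_sqrt (hc y y')
    nlinarith [sq_nonneg (Real.sqrt (c y y') - e)]
  exact le_of_sq_le_sq_aux ht (by nlinarith)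

lemma main_vec (G : ProjGame) (n : ℕ) (hn : 0 < n) (f : G.Q2 × G.A → Fin n → ℝ)
    (hf : ∀ p i, 0 ≤ f p i) (hx : ∀ v, ∑ i, (∑ β, f (v, β) i) ^ 2 ≤ 1) :
    ∑ i, G.normUsq (G.op (fun q => f q i)) ≤ 2 * G.collVal / (1 + G.collVal ^ 2) := by
  obtain ⟨x, hxdef⟩ : ∃ x : G.Q2 → Fin n → ℝ, ∀ v i, x v i = ∑ β, f (v, β) i := ⟨_, fun _ _ => rfl⟩
  simp only [← hxdef] at hx
  have hx0 : ∀ v i, 0 ≤ x v i := fun v i => by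
    rw [hxdef]; exact Finset.sum_nonneg fun _ _ => hf _ _
  have hx1 : ∀ v i, (x v i) ^ 2 ≤ 1 := fun v i =>
    (Finset.single_le_sum (f := fun i => (x v i) ^ 2) (fun i _ => sq_nonneg _)
      (Finset.mem_univ i)).trans (hx v)
  obtain ⟨k, t, w, hw, ht, hw1, hthr⟩ := aux_thr'
    (Finset.univ.image (fun z : G.Q2 × Fin n => (x z.1 z.2) ^ 2))
    (by intro s hs; obtain ⟨z, _, rfl⟩ := Finset.mem_image.1 hs; exact sq_nonneg _)
    (by intro s hs; obtain ⟨z, _, rfl⟩ := Finset.mem_image.1 hs; exact hx1 _ _)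
  have hth : ∀ v i, (∑ j, if t j < (x v i) ^ 2 then w j else 0) = (x v i) ^ 2 := fun v i =>
    hthr _ (Finset.mem_image.2 ⟨(v, i), Finset.mem_univ _, rfl⟩)
  have hmin : ∀ v v' i, (∑ j, if t j < (x v i) ^ 2 ∧ t j < (x v' i) ^ 2 then w j else 0)
      = min ((x v i) ^ 2) ((x v' i) ^ 2) := by
    intro v v' i
    simp only [← lt_min_iff]
    rcases min_choice ((x v i) ^ 2) ((x v' i) ^ 2) with h | h <;> rw [h, hth]
  have hmax : ∀ v v' i, (∑ j, if t j < (x v i) ^ 2 ∨ t j < (x v' i) ^ 2 then w j else 0)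
      = max ((x v i) ^ 2) ((x v' i) ^ 2) := by
    intro v v' i
    simp only [← lt_max_iff]
    rcases max_choice ((x v i) ^ 2) ((x v' i) ^ 2) with h | h <;> rw [h, hth]
  have hn' : (0 : ℝ) < n := Nat.cast_pos.2 hn
  let w' : Fin n × Fin k → ℝ := fun o => w o.2 / n
  let act : Fin n × Fin k → G.Q2 → Prop := fun o v => t o.2 < (x v o.1) ^ 2
  let h : Fin n × Fin k → G.Q2 × G.A → ℝ := fun o q =>
    if t o.2 < (x q.1 o.1) ^ 2 then f q o.1 / x q.1 o.1 else 0
  let H : G.Q2 × G.A → G.Q2 × G.A → ℝ := fun a b => ∑ o, w' o * (h o a * h o b)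
  let Mx : G.Q2 → G.Q2 → ℝ := fun v v' => ∑ i, max ((x v i) ^ 2) ((x v' i) ^ 2)
  have hMx0 : ∀ v v', 0 ≤ Mx v v' := fun v v' =>
    Finset.sum_nonneg fun i _ => le_max_of_le_left (sq_nonneg _)
  have hw'1 : ∑ o, w' o = 1 := by
    rw [Fintype.sum_prod_type]
    simp only [w', ← Finset.sum_div, hw1]
    simp [hn'.ne']
  have : ∀ o v, Decidable (act o v) := fun o v => inferInstanceAs (Decidable (_ < _))
  let P : Fin n → (G.Q2 × (G.A → Option G.A)) → (G.Q2 × (G.A → Option G.A)) → ℝ := fun i =>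
    G.xq (fun a b => f a i * f b i)
  let a : (G.Q2 × (G.A → Option G.A)) → (G.Q2 × (G.A → Option G.A)) → ℝ := fun y y' =>
    ∑ i, min ((x y.1 i) ^ 2) ((x y'.1 i) ^ 2) * ((x y.1 i * x y'.1 i)⁻¹ * P i y y')
  have hround := G.round_lim w' (fun o => div_nonneg (hw _) hn'.le) hw'1 act h
    (by
      intro o p
      simp only [h]
      split_ifs
      · exact div_nonneg (hf _ _) (hx0 _ _)
      · exact le_rfl)
    (by
      intro o v hav
      have hav' : t o.2 < (x v o.1) ^ 2 := hav
      simp only [h, if_pos hav', ← Finset.sum_div, ← hxdef]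
      apply div_self
      intro h0
      rw [h0] at hav'
      have := ht o.2
      norm_num at hav'
      linarith)
    (by
      intro o v hav β
      have hav' : ¬ t o.2 < (x v o.1) ^ 2 := hav
      simp only [h, if_neg hav'])
    H (fun _ _ => rfl) (fun v v' => Mx v v' / n)
    (by
      intro v v'
      have e : Mx v v' / n = ∑ o, w' o * (if act o v ∨ act o v' then 1 else 0) := by
        rw [Fintype.sum_prod_type]
        simp only [Mx, Finset.sum_div, ← hmax, w', act]
        refine Finset.sum_congr rfl fun i _ => Finset.sum_congr rfl fun j _ => ?_
        split_ifs <;> simp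
      rw [e]
      refine le_of_eq_of_le (congrArg (· - _) hw'1.symm) ?_
      rw [← Finset.sum_sub_distrib]
      refine Finset.sum_le_sum fun o _ => ?_
      split_ifs <;> simp)
    (fun v v' => div_nonneg (hMx0 _ _) hn'.le)
    (by
      intro v v'
      rw [div_le_one hn']
      calc Mx v v' ≤ ∑ i : Fin n, (1 : ℝ) :=
            Finset.sum_le_sum fun i _ => max_le (hx1 _ _) (hx1 _ _)
        _ = n := by simp)
  have hxqH : ∀ y y', G.xq H y y' = a y y' / n := by
    intro y y'
    have e1 : ∀ o, G.xq (fun p q => h o p * h o q) y y' =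
        (if t o.2 < (x y.1 o.1) ^ 2 ∧ t o.2 < (x y'.1 o.1) ^ 2 then
          (x y.1 o.1 * x y'.1 o.1)⁻¹ else 0) * P o.1 y y' := by
      intro o
      rw [← G.xq_scale _ (fun v v' => if t o.2 < (x v o.1) ^ 2 ∧ t o.2 < (x v' o.1) ^ 2 then
          (x v o.1 * x v' o.1)⁻¹ else 0)]
      congr 1
      funext p q
      simp only [h]
      by_cases h1 : t o.2 < (x p.1 o.1) ^ 2 <;> by_cases h2 : t o.2 < (x q.1 o.1) ^ 2 <;>
        simp [h1, h2, div_eq_mul_inv]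
      ring
    simp only [H, a]
    rw [G.xq_sum w' (fun o a b => h o a * h o b), Fintype.sum_prod_type, Finset.sum_div]
    refine Finset.sum_congr rfl fun i _ => ?_
    rw [← hmin, Finset.sum_mul, Finset.sum_div]
    refine Finset.sum_congr rfl fun j _ => ?_
    rw [e1]
    simp only [w']
    split_ifs
    · ring
    · simp
  have hround' : G.xB (fun y y' => (Mx y.1 y'.1)⁻¹ * a y y') ≤ G.collVal ^ 2 := by
    refine le_of_eq_of_le ?_ hround
    congr 1
    funext y y'
    rw [hxqH, inv_div]
    field_simp
  have hP0 : ∀ i y y', 0 ≤ P i y y' := fun i y y' =>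
    G.xq_prod_nonneg (fun p => hf p i) (fun p => hf p i) y y'
  have hP1 : ∀ i y y', P i y y' ≤ x y.1 i * x y'.1 i := fun i y y' => by
    rw [hxdef, hxdef]
    exact G.xq_prod_le (fun p => hf p i) (fun p => hf p i) y y'
  have hr0 : ∀ i y y', 0 ≤ (x y.1 i * x y'.1 i)⁻¹ * P i y y' := fun i y y' =>
    mul_nonneg (inv_nonneg.2 (mul_nonneg (hx0 _ _) (hx0 _ _))) (hP0 _ _ _)
  have hr1 : ∀ i y y', (x y.1 i * x y'.1 i)⁻¹ * P i y y' ≤ 1 := fun i y y' =>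
    inv_mul_le_one_of_le₀ (hP1 i y y') (mul_nonneg (hx0 _ _) (hx0 _ _))
  have hmn : ∀ v v' i, 0 ≤ min ((x v i) ^ 2) ((x v' i) ^ 2) := fun v v' i =>
    le_min (sq_nonneg _) (sq_nonneg _)
  have ha0 : ∀ y y', 0 ≤ a y y' := fun y y' =>
    Finset.sum_nonneg fun i _ => mul_nonneg (hmn _ _ _) (hr0 _ _ _)
  have ham : ∀ y y', a y y' ≤ ∑ i, min ((x y.1 i) ^ 2) ((x y'.1 i) ^ 2) := fun y y' =>
    Finset.sum_le_sum fun i _ => mul_le_of_le_one_right (hmn _ _ _) (hr1 _ _ _)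
  have haM : ∀ y y', a y y' ≤ Mx y.1 y'.1 := fun y y' =>
    (ham y y').trans (Finset.sum_le_sum fun i _ => min_le_max)
  have ha2 : ∀ y y', a y y' + Mx y.1 y'.1 ≤ 2 := fun y y' => by
    have : (∑ i, min ((x y.1 i) ^ 2) ((x y'.1 i) ^ 2)) + Mx y.1 y'.1 =
        ∑ i, (x y.1 i) ^ 2 + ∑ i, (x y'.1 i) ^ 2 := by
      simp only [Mx, ← Finset.sum_add_distrib, min_add_max]
    linarith [ham y y', hx y.1, hx y'.1]
  have hpa : ∀ y y', (∑ i, P i y y') ^ 2 ≤ a y y' * Mx y.1 y'.1 := fun y y' => by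
    refine Finset.sum_sq_le_sum_mul_sum_of_sq_le_mul _ (fun i _ => mul_nonneg (hmn _ _ _) (hr0 _ _ _))
      (fun i _ => le_max_of_le_left (sq_nonneg _)) (fun i _ => ?_)
    have e : min ((x y.1 i) ^ 2) ((x y'.1 i) ^ 2) * ((x y.1 i * x y'.1 i)⁻¹ * P i y y') *
        max ((x y.1 i) ^ 2) ((x y'.1 i) ^ 2) = (x y.1 i * x y'.1 i) ^ 2 *
          ((x y.1 i * x y'.1 i)⁻¹ * P i y y') := by
      rw [mul_right_comm, min_mul_max]; ring
    rw [e]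
    have h1 := hP1 i y y'
    have h0 := hP0 i y y'
    rcases eq_or_ne (x y.1 i * x y'.1 i) 0 with hz | hz
    · have : P i y y' = 0 := by rw [hz] at h1; exact le_antisymm h1 h0
      simp [this]
    · have : (x y.1 i * x y'.1 i) ^ 2 * ((x y.1 i * x y'.1 i)⁻¹ * P i y y') =
        (x y.1 i * x y'.1 i) * P i y y' := by field_simp
      rw [this, sq]
      exact mul_le_mul_of_nonneg_right h1 h0
  have hval : ∑ i, G.normUsq (G.op (fun q => f q i)) = G.xB (fun y y' => ∑ i, P i y y') := by
    have := G.xB_sum (fun _ : Fin n => (1 : ℝ)) P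
    simp only [one_mul] at this
    rw [this]
    exact Finset.sum_congr rfl fun i _ => G.normUsq_op _
  rw [hval]
  have hC0 := G.collVal_nonneg
  have hC1 := G.collVal_le
  set C := G.collVal
  have hc0 : ∀ y y', 0 ≤ (Mx y.1 y'.1)⁻¹ * a y y' := fun y y' =>
    mul_nonneg (inv_nonneg.2 (hMx0 _ _)) (ha0 _ _)
  have hJ := G.xB_jensen _ hc0 hC0 hround'
  set D := 2 * (1 - C ^ 2) / (1 + C ^ 2) ^ 2 with hD
  have hD0 : 0 ≤ D := by
    have : 0 ≤ 1 - C ^ 2 := by nlinarith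
    positivity
  calc G.xB (fun y y' => ∑ i, P i y y')
      ≤ G.xB (fun y y' => (2 * C / (1 + C ^ 2) - D * C) * 1 +
          D * Real.sqrt ((Mx y.1 y'.1)⁻¹ * a y y')) := by
        refine G.xB_mono fun y y' => ?_
        have h1 := aux_scalar (ha0 y y') (haM y y') (ha2 y y') (hpa y y')
        have h2 := aux_tangent (p := ∑ i, P i y y') (Real.sqrt_nonneg _) hC0 hC1 (by
          rw [Real.sq_sqrt (hc0 y y')]; exact h1)
        rw [← hD] at h2
        linarith
    _ = (2 * C / (1 + C ^ 2) - D * C) * 1 +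
          D * G.xB (fun y y' => Real.sqrt ((Mx y.1 y'.1)⁻¹ * a y y')) := by
        rw [G.xB_lin _ _ (fun _ _ => 1), xB_one]
    _ ≤ _ := by nlinarith [mul_le_mul_of_nonneg_left hJ hD0]

lemma valPlus_sq_le (G : ProjGame) :
    G.valPlus ^ 2 ≤ 2 * G.collVal / (1 + G.collVal ^ 2) := by
  have hC0 := G.collVal_nonneg
  have hR : 0 ≤ 2 * G.collVal / (1 + G.collVal ^ 2) := by positivity
  have h0 : 0 ≤ G.valPlus := by
    apply Real.sSup_nonneg
    rintro x ⟨n, _, f, _, _, rfl⟩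
    exact Real.sqrt_nonneg _
  have : G.valPlus ≤ Real.sqrt (2 * G.collVal / (1 + G.collVal ^ 2)) := by
    apply Real.sSup_le _ (Real.sqrt_nonneg _)
    rintro x ⟨n, hn, f, hf, hx, rfl⟩
    apply Real.sqrt_le_sqrt
    refine le_of_eq_of_le ?_ (G.main_vec n hn f hf fun v => Real.sqrt_le_one.1 (hx v))
    unfold normUsq
    rw [Finset.sum_comm]
    refine Finset.sum_congr rfl fun u _ => ?_
    rw [← Finset.mul_sum, Finset.sum_comm]
  calc G.valPlus ^ 2 ≤ Real.sqrt (2 * G.collVal / (1 + G.collVal ^ 2)) ^ 2 := by gcongr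
    _ = _ := Real.sq_sqrt hR

end ProjGame


/-- **Approximation.** If `val₊(G)² > ρ` then `‖G‖² > (1-√(1-ρ²))/(1+√(1-ρ²))`;
contrapositively, if `‖G‖² < δ` then `val₊(G)² < 2√δ/(1+δ)`. -/
theorem valPlus_approximation (G : ProjGame) (ρ : ℝ) (hρ0 : 0 ≤ ρ) (hρ1 : ρ ≤ 1) :
    (ρ < G.valPlus ^ 2 →
      (1 - Real.sqrt (1 - ρ ^ 2)) / (1 + Real.sqrt (1 - ρ ^ 2)) < G.collVal ^ 2) ∧
    (∀ δ : ℝ, 0 ≤ δ → δ ≤ 1 → G.collVal ^ 2 < δ →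
      G.valPlus ^ 2 < 2 * Real.sqrt δ / (1 + δ)) := by
  have hv := G.valPlus_sq_le
  have hC0 := G.collVal_nonneg
  have hC1 := G.collVal_le
  set C := G.collVal
  constructor
  · intro h
    set r := Real.sqrt (1 - ρ ^ 2) with hr
    have hr0 : 0 ≤ r := Real.sqrt_nonneg _
    have hr2 : r ^ 2 = 1 - ρ ^ 2 := Real.sq_sqrt (by nlinarith)
    have h1 : ρ < 2 * C / (1 + C ^ 2) := h.trans_le hv
    rw [lt_div_iff₀ (by positivity)] at h1
    have h2 : (ρ * (1 + C ^ 2)) ^ 2 < (2 * C) ^ 2 := by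
      have : 0 ≤ ρ * (1 + C ^ 2) := by positivity
      gcongr
    have hCC : C ^ 2 ≤ 1 := by nlinarith
    have h3 : (1 - C ^ 2) ^ 2 < (r * (1 + C ^ 2)) ^ 2 := by
      rw [mul_pow] at h2 ⊢
      rw [hr2]
      nlinarith
    have h4 : 1 - C ^ 2 < r * (1 + C ^ 2) := lt_of_pow_lt_pow_left₀ 2 (by positivity) h3
    rw [div_lt_iff₀ (by positivity)]
    nlinarith
  · intro δ hδ0 hδ1 h
    refine hv.trans_lt ?_
    set d := Real.sqrt δ with hd
    have hd0 : 0 ≤ d := Real.sqrt_nonneg _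
    have hd2 : d ^ 2 = δ := Real.sq_sqrt hδ0
    rw [← hd2] at h hδ1 ⊢
    have hCd : C < d := lt_of_pow_lt_pow_left₀ 2 hd0 h
    have hd1 : d ≤ 1 := by nlinarith
    rw [div_lt_div_iff₀ (by positivity) (by positivity)]
    have hlt : C * d < 1 := by nlinarith
    nlinarith [mul_pos (sub_pos.2 hCd) (sub_pos.2 hlt)]
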